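/- Let (A,S,Z,Φ) be a structured C*-algebra. Then Z is productive if and only if Z¹₊ (the set of positive elements of Z of norm at most 1) is productive. -/

import Mathlib

variable {A : Type*} [CStarAlgebra A] [PartialOrder A] [StarOrderedRing A]

/-- A structured C*-algebra `(A, S, Z, Φ)`. -/
structure StructuredCStar (A : Type*) [CStarAlgebra A] [PartialOrder A]
    [StarOrderedRing A] where
  /-- The expectation. -/
  Φ : A →ₗ[ℂ] A
  /-- The distinguished closed *-subsemigroup. -/
  S : Set A
  /-- The distinguished central C*-subalgebra. -/
  Z : Set A
  Φ_idem : ∀ a : A, Φ (Φ a) = Φ a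
  Φ_contractive : ∀ a : A, ‖Φ a‖ ≤ ‖a‖
  Φ_pos : ∀ a : A, 0 ≤ a → 0 ≤ Φ a
  Φ_mul_left : ∀ a b : A, Φ (Φ a * b) = Φ a * Φ b
  Φ_mul_right : ∀ a b : A, Φ (a * Φ b) = Φ a * Φ b
  S_isClosed : IsClosed S
  S_mul : ∀ a ∈ S, ∀ b ∈ S, a * b ∈ S
  S_star : ∀ a ∈ S, star a ∈ S
  S_smul : ∀ (c : ℂ), ∀ a ∈ S, c • a ∈ S
  Z_sub_S : Z ⊆ S
  Z_isClosed : IsClosed Z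
  Z_add : ∀ a ∈ Z, ∀ b ∈ Z, a + b ∈ Z
  Z_mul : ∀ a ∈ Z, ∀ b ∈ Z, a * b ∈ Z
  Z_star : ∀ a ∈ Z, star a ∈ Z
  Z_smul : ∀ (c : ℂ), ∀ a ∈ Z, c • a ∈ Z
  Z_fixed : ∀ z ∈ Z, Φ z = z
  Z_central : ∀ z ∈ Z, ∀ a : A, z * Φ a = Φ a * z
  PhiS_add : ∀ x ∈ Φ '' S, ∀ y ∈ Φ '' S, x + y ∈ Φ '' S
  PhiS_ideal_right : ∀ x ∈ Φ '' S, ∀ a : A, x * Φ a ∈ Φ '' S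
  PhiS_ideal_left : ∀ x ∈ Φ '' S, ∀ a : A, Φ a * x ∈ Φ '' S
  S_sq_sub_PhiS : ∀ s ∈ S, star s * s ∈ Φ '' S
  PhiS_sub_S : ∀ s ∈ S, Φ s ∈ S

namespace StructuredCStar

variable (𝒜 : StructuredCStar A)

/-- `a <_s b` : domination witnessed by `s`. -/
def domBy (a s b : A) : Prop :=
  a = a * s * b ∧ a = b * s * a ∧
  a * s ∈ 𝒜.Φ '' 𝒜.S ∧ s * a ∈ 𝒜.Φ '' 𝒜.S ∧
  b * s ∈ 𝒜.Z ∧ s * b ∈ 𝒜.Z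

/-- `a < b` : domination. -/
def dom (a b : A) : Prop := ∃ s ∈ 𝒜.S, 𝒜.domBy a s b

/-- `N ⊆ S` is binormal. -/
def Binormal (N : Set A) : Prop :=
  ∀ a ∈ 𝒜.S, ∀ b ∈ 𝒜.S, a * b ∈ N → ∀ z ∈ N, a * z * b ∈ N

/-- `B ⊆ S` is bistable. -/
def Bistable (B : Set A) : Prop :=
  ∀ a ∈ 𝒜.S, ∀ b ∈ 𝒜.S, a * b ∈ B → 𝒜.Φ a * b ∈ B ∧ a * 𝒜.Φ b ∈ B

/-- `P ⊆ S` is productive. -/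
def Productive (P : Set A) : Prop :=
  ∀ a ∈ 𝒜.S, 𝒜.Φ a ∈ closure ((a * ·) '' P) ∧ 𝒜.Φ a ∈ closure ((· * a) '' P)

end StructuredCStar

/-! If `a * z ≈ Φ a` with `z ∈ Z`, then applying `Φ` gives `Φ a * z ≈ Φ a`, so that
`(a - Φ a) * z ≈ 0` and `Φ a * (1 - z) ≈ 0`. Let `y = p(z)`, where `p` is the nearest-point
projection of `ℂ` onto `[0, 1]`. As `p` is nonexpansive and fixes `0` and `1`, both `|p(t)| ≤ |t|`
and `|1 - p(t)| ≤ |1 - t|`, hence `(a - Φ a) * y ≈ 0` and `Φ a * (1 - y) ≈ 0`, that is,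
`a * y ≈ Φ a`, with errors controlled independently of `‖z‖`. Products on the other side are
reached by taking adjoints, because positive maps preserve them. -/

/-- The nearest-point projection of the complex plane onto the real interval `[0, 1]`. Applied to a
normal element by the functional calculus, it yields a positive contraction. -/
noncomputable def unitIntervalProj (t : ℂ) : ℂ :=
  (Set.projIcc (0 : ℝ) 1 zero_le_one t.re : ℝ)

open scoped ComplexOrder in
theorem unitIntervalProj_nonneg (t : ℂ) : 0 ≤ unitIntervalProj t :=
  Complex.zero_le_real.2 (Set.projIcc (0 : ℝ) 1 zero_le_one t.re).2.1

@[simp]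
theorem unitIntervalProj_zero : unitIntervalProj 0 = 0 := by
  simp [unitIntervalProj]

@[simp]
theorem unitIntervalProj_one : unitIntervalProj 1 = 1 := by
  simp [unitIntervalProj]

theorem norm_unitIntervalProj_le_one (t : ℂ) : ‖unitIntervalProj t‖ ≤ 1 := by
  have h := (Set.projIcc (0 : ℝ) 1 zero_le_one t.re).2
  rw [unitIntervalProj, Complex.norm_of_nonneg h.1]
  exact h.2

theorem lipschitzWith_unitIntervalProj : LipschitzWith 1 unitIntervalProj := by
  refine LipschitzWith.mk_one fun s t ↦ ?_
  calc dist (unitIntervalProj s) (unitIntervalProj t)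
      = dist (Set.projIcc (0 : ℝ) 1 zero_le_one s.re) (Set.projIcc (0 : ℝ) 1 zero_le_one t.re) :=
        Complex.isometry_ofReal.dist_eq _ _
    _ ≤ dist s.re t.re := by
        simpa only [NNReal.coe_one, one_mul] using
          (LipschitzWith.projIcc zero_le_one).dist_le_mul s.re t.re
    _ ≤ dist s t := by
        simpa only [dist_eq_norm, Real.norm_eq_abs, Complex.sub_re] using
          Complex.abs_re_le_norm (s - t)

@[fun_prop]
theorem continuous_unitIntervalProj : Continuous unitIntervalProj :=
  lipschitzWith_unitIntervalProj.continuous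

theorem norm_unitIntervalProj_sub_le (s t : ℂ) :
    ‖unitIntervalProj s - unitIntervalProj t‖ ≤ ‖s - t‖ := by
  simpa using lipschitzWith_unitIntervalProj.norm_sub_le s t

theorem norm_unitIntervalProj_le (t : ℂ) : ‖unitIntervalProj t‖ ≤ ‖t‖ := by
  simpa using norm_unitIntervalProj_sub_le t 0

theorem norm_one_sub_unitIntervalProj_le (t : ℂ) : ‖1 - unitIntervalProj t‖ ≤ ‖1 - t‖ := by
  simpa using norm_unitIntervalProj_sub_le 1 t

theorem norm_mul_le_norm_mul_of_mul_star_le {B : Type*} [NonUnitalCStarAlgebra B] [PartialOrder B]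
    [StarOrderedRing B] {c d : B} (h : c * star c ≤ d * star d) (b : B) :
    ‖b * c‖ ≤ ‖b * d‖ := by
  have hsq (x : B) : ‖b * x‖ ^ 2 = ‖b * (x * star x) * star b‖ := by
    rw [sq, ← CStarRing.norm_self_mul_star, star_mul]
    simp only [mul_assoc]
  refine le_of_sq_le_sq ?_ (norm_nonneg _)
  rw [hsq c, hsq d]
  exact CStarAlgebra.norm_le_norm_of_nonneg_of_le
    (star_right_conjugate_nonneg (mul_star_self_nonneg c) b)
    (star_right_conjugate_le_conjugate h b)

theorem norm_mul_cfc_le_norm_mul_cfc {B : Type*} [CStarAlgebra B] {f g : ℂ → ℂ} {z : B}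
    (h : ∀ t ∈ spectrum ℂ z, ‖f t‖ ≤ ‖g t‖)
    (hf : ContinuousOn f (spectrum ℂ z) := by cfc_cont_tac)
    (hg : ContinuousOn g (spectrum ℂ z) := by cfc_cont_tac) (b : B) :
    ‖b * cfc f z‖ ≤ ‖b * cfc g z‖ := by
  let _ := CStarAlgebra.spectralOrder B
  have _ := CStarAlgebra.spectralOrderedRing B
  open scoped ComplexOrder in
  have hcfc : cfc (fun t ↦ f t * star (f t)) z ≤ cfc (fun t ↦ g t * star (g t)) z := by
    refine cfc_mono fun t ht ↦ ?_
    simp only [RCLike.star_def, RCLike.mul_conj]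
    exact_mod_cast pow_le_pow_left₀ (norm_nonneg _) (h t ht) 2
  rw [cfc_mul f _ z, cfc_mul g _ z, cfc_star, cfc_star] at hcfc
  exact norm_mul_le_norm_mul_of_mul_star_le hcfc b

open scoped ComplexOrder in
theorem exists_nonneg_contraction_of_isStarNormal
    (C : NonUnitalStarSubalgebra ℂ A) (hC : IsClosed (C : Set A)) {z : A} [IsStarNormal z]
    (hz : z ∈ C) :
    ∃ y ∈ C, 0 ≤ y ∧ ‖y‖ ≤ 1 ∧
      ∀ b : A, ‖b * y‖ ≤ ‖b * z‖ ∧ ‖b * (1 - y)‖ ≤ ‖b * (1 - z)‖ := by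
  have hmem : cfc unitIntervalProj z ∈ C := by
    rw [← cfcₙ_eq_cfc]
    exact cfcₙ_mem (𝕜' := ℂ) (hs := hC) unitIntervalProj hz
  have hsub (f : ℂ → ℂ) (hf : Continuous f) : 1 - cfc f z = cfc (fun t ↦ 1 - f t) z := by
    rw [cfc_sub (fun _ ↦ 1) f z, cfc_const_one ℂ z]
  refine ⟨cfc unitIntervalProj z, hmem, cfc_nonneg fun t _ ↦ unitIntervalProj_nonneg t,
    norm_cfc_le zero_le_one fun t _ ↦ norm_unitIntervalProj_le_one t, fun b ↦ ⟨?_, ?_⟩⟩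
  · simpa only [cfc_id' ℂ z] using
      norm_mul_cfc_le_norm_mul_cfc (z := z) (g := fun t ↦ t)
        (fun t _ ↦ norm_unitIntervalProj_le t) (b := b)
  · simpa only [← hsub _ continuous_unitIntervalProj, ← hsub _ continuous_id', cfc_id' ℂ z] using
      norm_mul_cfc_le_norm_mul_cfc (z := z) (fun t _ ↦ norm_one_sub_unitIntervalProj_le t) (b := b)

namespace StructuredCStar

variable (𝒜 : StructuredCStar A) {z : A}

/-- The set `Z`, when nonempty, as a star subalgebra, so that the functional calculus applies
within it. -/
def starSubalgebraZ (hZ : 𝒜.Z.Nonempty) : NonUnitalStarSubalgebra ℂ A where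
  carrier := 𝒜.Z
  add_mem' {a b} ha hb := 𝒜.Z_add a ha b hb
  zero_mem' := by
    obtain ⟨z, hz⟩ := hZ
    simpa only [zero_smul] using 𝒜.Z_smul 0 z hz
  mul_mem' {a b} ha hb := 𝒜.Z_mul a ha b hb
  smul_mem' c a ha := 𝒜.Z_smul c a ha
  star_mem' {a} ha := 𝒜.Z_star a ha

theorem isStarNormal_of_mem_Z (hz : z ∈ 𝒜.Z) : IsStarNormal z :=
  ⟨by simpa only [𝒜.Z_fixed z hz, commute_iff_eq] using 𝒜.Z_central _ (𝒜.Z_star z hz) z⟩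

theorem Φ_star (a : A) : 𝒜.Φ (star a) = star (𝒜.Φ a) :=
  map_star (PositiveLinearMap.mk₀ 𝒜.Φ 𝒜.Φ_pos) a

theorem productive_iff_of_star_mem {P : Set A} (hP : ∀ p ∈ P, star p ∈ P) :
    𝒜.Productive P ↔ ∀ a ∈ 𝒜.S, 𝒜.Φ a ∈ closure ((a * ·) '' P) := by
  refine ⟨fun h a ha ↦ (h a ha).1, fun h a ha ↦ ⟨h a ha, ?_⟩⟩
  have hmaps : Set.MapsTo star ((star a * ·) '' P) ((· * a) '' P) := by
    rintro _ ⟨p, hp, rfl⟩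
    exact ⟨star p, hP p hp, by simp only [star_mul, star_star]⟩
  simpa only [Φ_star, star_star] using
    map_mem_closure continuous_star (h (star a) (𝒜.S_star a ha)) hmaps

theorem norm_Φ_mul_one_sub_le (hz : z ∈ 𝒜.Z) (a : A) :
    ‖𝒜.Φ a * (1 - z)‖ ≤ ‖a * z - 𝒜.Φ a‖ := by
  have hΦ : 𝒜.Φ (a * z) = 𝒜.Φ a * z := by
    simpa only [𝒜.Z_fixed z hz] using 𝒜.Φ_mul_right a z
  calc ‖𝒜.Φ a * (1 - z)‖ = ‖𝒜.Φ (a * z - 𝒜.Φ a)‖ := by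
        rw [map_sub, hΦ, 𝒜.Φ_idem, mul_sub, mul_one, norm_sub_rev]
    _ ≤ ‖a * z - 𝒜.Φ a‖ := 𝒜.Φ_contractive _

theorem exists_nonneg_norm_mul_sub_Φ_le (hz : z ∈ 𝒜.Z) (a : A) :
    ∃ y ∈ 𝒜.Z, 0 ≤ y ∧ ‖y‖ ≤ 1 ∧ ‖a * y - 𝒜.Φ a‖ ≤ 3 * ‖a * z - 𝒜.Φ a‖ := by
  have := 𝒜.isStarNormal_of_mem_Z hz
  obtain ⟨y, hyZ, hy0, hy1, hy⟩ :=
    exists_nonneg_contraction_of_isStarNormal (𝒜.starSubalgebraZ ⟨z, hz⟩) 𝒜.Z_isClosed hz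
  refine ⟨y, hyZ, hy0, hy1, ?_⟩
  have hΦ := 𝒜.norm_Φ_mul_one_sub_le hz a
  have hsub : ‖(a - 𝒜.Φ a) * z‖ ≤ ‖a * z - 𝒜.Φ a‖ + ‖𝒜.Φ a * (1 - z)‖ := by
    have hz_eq : (a - 𝒜.Φ a) * z = (a * z - 𝒜.Φ a) + 𝒜.Φ a * (1 - z) := by noncomm_ring
    exact hz_eq ▸ norm_add_le _ _
  calc ‖a * y - 𝒜.Φ a‖ = ‖(a - 𝒜.Φ a) * y - 𝒜.Φ a * (1 - y)‖ := by congr 1; noncomm_ring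
    _ ≤ ‖(a - 𝒜.Φ a) * y‖ + ‖𝒜.Φ a * (1 - y)‖ := norm_sub_le _ _
    _ ≤ ‖(a - 𝒜.Φ a) * z‖ + ‖𝒜.Φ a * (1 - z)‖ := add_le_add (hy _).1 (hy _).2
    _ ≤ 3 * ‖a * z - 𝒜.Φ a‖ := by linarith

theorem Φ_mem_closure_mul_image_Z_iff (a : A) :
    𝒜.Φ a ∈ closure ((a * ·) '' 𝒜.Z) ↔
      𝒜.Φ a ∈ closure ((a * ·) '' {z ∈ 𝒜.Z | 0 ≤ z ∧ ‖z‖ ≤ 1}) := by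
  refine ⟨fun h ↦ ?_, fun h ↦ closure_mono (Set.image_mono (Set.sep_subset _ _)) h⟩
  rw [SeminormedAddCommGroup.mem_closure_iff] at h ⊢
  intro ε hε
  obtain ⟨_, ⟨z, hz, rfl⟩, hza⟩ := h (ε / 3) (by positivity)
  obtain ⟨y, hyZ, hy0, hy1, hy⟩ := 𝒜.exists_nonneg_norm_mul_sub_Φ_le hz a
  refine ⟨a * y, ⟨y, ⟨hyZ, hy0, hy1⟩, rfl⟩, ?_⟩
  rw [norm_sub_rev] at hza ⊢
  linarith

end StructuredCStar

/-- `Z` is productive iff `Z¹₊` is productive. -/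
theorem StructuredCStar.productive_iff_productive_pos_unitBall (𝒜 : StructuredCStar A) :
    𝒜.Productive 𝒜.Z ↔ 𝒜.Productive {z ∈ 𝒜.Z | 0 ≤ z ∧ ‖z‖ ≤ 1} := by
  have hstar : ∀ z ∈ {z ∈ 𝒜.Z | 0 ≤ z ∧ ‖z‖ ≤ 1}, star z ∈ {z ∈ 𝒜.Z | 0 ≤ z ∧ ‖z‖ ≤ 1} :=
    fun z hz ↦ by rwa [(IsSelfAdjoint.of_nonneg hz.2.1).star_eq]
  rw [𝒜.productive_iff_of_star_mem 𝒜.Z_star, 𝒜.productive_iff_of_star_mem hstar]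
  exact forall₂_congr fun a _ ↦ 𝒜.Φ_mem_closure_mul_image_Z_iff a
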